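/- If Γ^b ⊢_KD4 A^b, then Γ ⊢_EBPC A. -/

import Mathlib

/-! ### Modal formulas -/

inductive MF : Type
  | atom : ℕ → MF
  | bot  : MF
  | and  : MF → MF → MF
  | or   : MF → MF → MF
  | imp  : MF → MF → MF
  | neg  : MF → MF
  | box  : MF → MF
  deriving DecidableEq

namespace MF

/-- The set of atoms occurring in a modal formula. -/
def atoms : MF → Set ℕ
  | atom n => {n}
  | bot => ∅
  | and A B => atoms A ∪ atoms B
  | or A B => atoms A ∪ atoms B
  | imp A B => atoms A ∪ atoms B
  | neg A => atoms A
  | box A => atoms A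

/-- A boolean valuation on modal formulas respecting the classical connectives
(boxed formulas and atoms are treated as arbitrary). -/
def Respects (v : MF → Bool) : Prop :=
  v bot = false ∧
  (∀ A B, v (and A B) = (v A && v B)) ∧
  (∀ A B, v (or A B) = (v A || v B)) ∧
  (∀ A B, v (imp A B) = (!(v A) || v B)) ∧
  (∀ A, v (neg A) = !(v A))

/-- Classical propositional tautology (in the modal language). -/
def IsTaut (A : MF) : Prop := ∀ v, Respects v → v A = true

end MF

/-- Hilbert-style provability in the normal modal logic `K` extended by the
axiom scheme `Ax`: classical tautologies, scheme K, the extra axioms,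
modus ponens and necessitation. -/
inductive Prv (Ax : MF → Prop) : MF → Prop
  | taut {A : MF} : MF.IsTaut A → Prv Ax A
  | axK {A B : MF} : Prv Ax ((MF.box (A.imp B)).imp ((MF.box A).imp (MF.box B)))
  | extra {A : MF} : Ax A → Prv Ax A
  | mp {A B : MF} : Prv Ax (A.imp B) → Prv Ax A → Prv Ax B
  | nec {A : MF} : Prv Ax A → Prv Ax A.box

/-- Scheme 4 : □A → □□A. -/
def Ax4 (A : MF) : Prop := ∃ B, A = (MF.box B).imp (MF.box (MF.box B))
/-- Scheme T : □A → A. -/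
def AxT (A : MF) : Prop := ∃ B, A = (MF.box B).imp B
/-- Scheme D : ¬□⊥. -/
def AxD (A : MF) : Prop := A = MF.neg (MF.box MF.bot)
/-- Löb's scheme L : □(□A→A) → □A. -/
def AxGL (A : MF) : Prop := ∃ B, A = (MF.box ((MF.box B).imp B)).imp (MF.box B)

def AxK4  : MF → Prop := Ax4
def AxKD4 : MF → Prop := fun A => Ax4 A ∨ AxD A
def AxS4  : MF → Prop := fun A => Ax4 A ∨ AxT A

def PrvK   : MF → Prop := Prv (fun _ => False)
def PrvK4  : MF → Prop := Prv AxK4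
def PrvKD4 : MF → Prop := Prv AxKD4
def PrvS4  : MF → Prop := Prv AxS4
def PrvGL  : MF → Prop := Prv AxGL

/-- Conjunction of a finite list of modal formulas (empty conjunction is ⊤ := ⊥→⊥). -/
def conjL (l : List MF) : MF := l.foldr MF.and (MF.imp MF.bot MF.bot)

/-- `ModalConseq Ax Γ A` : there are B₁,…,Bₙ ∈ Γ with ⊢ (B₁∧…∧Bₙ)→A in K + Ax. -/
def ModalConseq (Ax : MF → Prop) (Γ : Set MF) (A : MF) : Prop :=
  ∃ l : List MF, (∀ B ∈ l, B ∈ Γ) ∧ Prv Ax ((conjL l).imp A)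

/-! ### Annotated modal formulas and translations -/

/-- Modal formulas with every occurrence of □ annotated by a natural number. -/
inductive AMF : Type
  | atom : ℕ → AMF
  | bot  : AMF
  | and  : AMF → AMF → AMF
  | or   : AMF → AMF → AMF
  | imp  : AMF → AMF → AMF
  | neg  : AMF → AMF
  | box  : ℕ → AMF → AMF

namespace AMF

/-- Forget the annotations. -/
def erase : AMF → MF
  | atom n => .atom n
  | bot => .bot
  | and A B => .and (erase A) (erase B)
  | or A B => .or (erase A) (erase B)
  | imp A B => .imp (erase A) (erase B)
  | neg A => .neg (erase A)
  | box _ A => .box (erase A)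

/-- The list of all annotations occurring in an annotated formula. -/
def labels : AMF → List ℕ
  | atom _ => []
  | bot => []
  | and A B => labels A ++ labels B
  | or A B => labels A ++ labels B
  | imp A B => labels A ++ labels B
  | neg A => labels A
  | box n A => n :: labels A

/-- A translation is ordered when the number assigned to each box is strictly
greater than all numbers assigned to boxes in its scope. -/
def Ordered : AMF → Prop
  | atom _ => True
  | bot => True
  | and A B => Ordered A ∧ Ordered B
  | or A B => Ordered A ∧ Ordered B
  | imp A B => Ordered A ∧ Ordered B
  | neg A => Ordered A
  | box n A => Ordered A ∧ ∀ m ∈ labels A, m < n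

end AMF

/-- `conjQ q n` is the conjunction q₀ ∧ … ∧ q_n of the atoms `q i`. -/
def conjQ (q : ℕ → ℕ) : ℕ → MF
  | 0 => .atom (q 0)
  | n+1 => (conjQ q n).and (.atom (q (n+1)))

/-- The formula `A^t`: commutes with connectives and `(□B)^t = □(q₀∧…∧q_n → B^t)`
where `n` is the annotation on that box. -/
def AMF.trans (q : ℕ → ℕ) : AMF → MF
  | .atom n => .atom n
  | .bot => .bot
  | .and A B => (trans q A).and (trans q B)
  | .or A B => (trans q A).or (trans q B)
  | .imp A B => (trans q A).imp (trans q B)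
  | .neg A => (trans q A).neg
  | .box n A => .box ((conjQ q n).imp (trans q A))

/-! ### Kripke semantics -/

/-- Classical Kripke forcing for modal formulas. -/
def Forces {W : Type} (R : W → W → Prop) (V : ℕ → W → Prop) : W → MF → Prop
  | w, .atom n => V n w
  | _, .bot => False
  | w, .and A B => Forces R V w A ∧ Forces R V w B
  | w, .or A B => Forces R V w A ∨ Forces R V w B
  | w, .imp A B => Forces R V w A → Forces R V w B
  | w, .neg A => ¬ Forces R V w A
  | w, .box A => ∀ u, R w u → Forces R V u A

/-- Cluster equivalence: `x = y`, or `x R y` and `y R x`. -/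
def ClusterEq {W : Type} (R : W → W → Prop) (x y : W) : Prop :=
  x = y ∨ (R x y ∧ R y x)

/-- A transitive frame whose clusters form a tree and in which every cluster is
a single irreflexive point or a nonempty set of reflexive points. -/
structure TreeWithClusters {W : Type} (R : W → W → Prop) : Prop where
  trans : Transitive R
  rooted : ∃ r, ∀ x, ClusterEq R r x ∨ R r x
  treelike : ∀ x y z, R x z → R y z → (ClusterEq R x y ∨ R x y ∨ R y x)
  cluster_irrefl_singleton : ∀ x, ¬ R x x → ∀ y, ClusterEq R x y → y = x
  cluster_homog : ∀ x y, ClusterEq R x y → (R x x → R y y)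

/-! ### Expansions -/

/-- `Expansion A B` : `B ∈ E(A)`, the set of expansions of `A`. -/
inductive Expansion : MF → MF → Prop
  | atom (n) : Expansion (.atom n) (.atom n)
  | bot : Expansion .bot .bot
  | and {A B D E : MF} : Expansion A D → Expansion B E → Expansion (A.and B) (D.and E)
  | or {A B D E : MF} : Expansion A D → Expansion B E → Expansion (A.or B) (D.or E)
  | imp {A B D E : MF} : Expansion A D → Expansion B E → Expansion (A.imp B) (D.imp E)
  | neg {A D : MF} : Expansion A D → Expansion A.neg D.neg
  | box {A D : MF} (l : List MF) : Expansion A D → (∀ E ∈ l, Expansion A E) →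
      Expansion A.box (MF.box (l.foldr MF.or D))

/-! ### Propositional formulas and Visser-style natural deduction -/

inductive PF : Type
  | atom : ℕ → PF
  | bot  : PF
  | and  : PF → PF → PF
  | or   : PF → PF → PF
  | imp  : PF → PF → PF
  deriving DecidableEq

def PF.top : PF := .imp .bot .bot
def PF.neg (A : PF) : PF := A.imp .bot

/-- Natural deduction derivability from a set of assumptions.  `ef` switches
the ex falso rule on/off; `Rule` is an additional rule given as a relation
between a list of premises and a conclusion.  The base system (with `ef`
and no extra rule) is Visser's BPC: ∧/∨ intro and elim, →I (discharging),
ex falso, and the formalized rules; no modus ponens. -/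
inductive Deriv (ef : Prop) (Rule : List PF → PF → Prop) : Set PF → PF → Prop
  | hyp {Γ : Set PF} {A : PF} : A ∈ Γ → Deriv ef Rule Γ A
  | andI {Γ : Set PF} {A B : PF} : Deriv ef Rule Γ A → Deriv ef Rule Γ B → Deriv ef Rule Γ (A.and B)
  | andE1 {Γ : Set PF} {A B : PF} : Deriv ef Rule Γ (A.and B) → Deriv ef Rule Γ A
  | andE2 {Γ : Set PF} {A B : PF} : Deriv ef Rule Γ (A.and B) → Deriv ef Rule Γ B
  | orI1 {Γ : Set PF} {A B : PF} : Deriv ef Rule Γ A → Deriv ef Rule Γ (A.or B)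
  | orI2 {Γ : Set PF} {A B : PF} : Deriv ef Rule Γ B → Deriv ef Rule Γ (A.or B)
  | orE {Γ : Set PF} {A B C : PF} : Deriv ef Rule Γ (A.or B) → Deriv ef Rule (insert A Γ) C →
      Deriv ef Rule (insert B Γ) C → Deriv ef Rule Γ C
  | impI {Γ : Set PF} {A B : PF} : Deriv ef Rule (insert A Γ) B → Deriv ef Rule Γ (A.imp B)
  | exfalso {Γ : Set PF} {A : PF} : ef → Deriv ef Rule Γ .bot → Deriv ef Rule Γ A
  | fAndI {Γ : Set PF} {A B C : PF} : Deriv ef Rule Γ (A.imp B) → Deriv ef Rule Γ (A.imp C) →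
      Deriv ef Rule Γ (A.imp (B.and C))
  | fOrE {Γ : Set PF} {A B C : PF} : Deriv ef Rule Γ (A.imp C) → Deriv ef Rule Γ (B.imp C) →
      Deriv ef Rule Γ ((A.or B).imp C)
  | fTr {Γ : Set PF} {A B C : PF} : Deriv ef Rule Γ (A.imp B) → Deriv ef Rule Γ (B.imp C) →
      Deriv ef Rule Γ (A.imp C)
  | extra {Γ : Set PF} {ps : List PF} {c : PF} : Rule ps c → (∀ p ∈ ps, Deriv ef Rule Γ p) → Deriv ef Rule Γ c

/-- No extra rule. -/
def RuleNone : List PF → PF → Prop := fun _ _ => False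
/-- Rule C : from A and ¬A infer ⊥. -/
def RuleC : List PF → PF → Prop := fun ps c => ∃ A : PF, ps = [A, A.neg] ∧ c = .bot
/-- Rule R (modus ponens) : from A and A→B infer B. -/
def RuleR : List PF → PF → Prop := fun ps c => ∃ A B : PF, ps = [A, A.imp B] ∧ c = B
/-- Löb's rule L : from (A∧(A→B))→B infer A→B. -/
def RuleL : List PF → PF → Prop :=
  fun ps c => ∃ A B : PF, ps = [(A.and (A.imp B)).imp B] ∧ c = A.imp B
/-- Rule C' : from ⊤→⊥ infer ⊥. -/
def RuleC' : List PF → PF → Prop := fun ps c => ps = [PF.top.imp .bot] ∧ c = .bot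
/-- Rule R' : from ⊤→A infer A. -/
def RuleR' : List PF → PF → Prop := fun ps c => ∃ A : PF, ps = [PF.top.imp A] ∧ c = A
/-- Rule L' : from (⊤→A)→A infer ⊤→A. -/
def RuleL' : List PF → PF → Prop :=
  fun ps c => ∃ A : PF, ps = [(PF.top.imp A).imp A] ∧ c = PF.top.imp A

def BPC  : Set PF → PF → Prop := Deriv True RuleNone
def EBPC : Set PF → PF → Prop := Deriv True RuleC
def IPC  : Set PF → PF → Prop := Deriv True RuleR
def FPL  : Set PF → PF → Prop := Deriv True RuleL
def MPC  : Set PF → PF → Prop := Deriv False RuleR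

/-! ### BHK translations -/

/-- The BHK translation `b`. -/
def bhk : PF → MF
  | .atom n => .box (.atom n)
  | .bot => .box .bot
  | .and A B => (bhk A).and (bhk B)
  | .or A B => (bhk A).or (bhk B)
  | .imp A B => .box ((bhk A).imp (bhk B))

/-- The weak BHK translation `w`.  The propositional atom `n` is embedded as
the modal atom `n+1`, and the fresh atom `q` (not in the propositional
language) is the modal atom `0`; `⊥^w = □q`. -/
def wtr : PF → MF
  | .atom n => .box (.atom (n+1))
  | .bot => .box (.atom 0)
  | .and A B => (wtr A).and (wtr B)
  | .or A B => (wtr A).or (wtr B)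
  | .imp A B => .box ((wtr A).imp (wtr B))

/-! ### The cut-free sequent calculus G(KD4) -/

/-- Cut-free derivability in the sequent calculus G(KD4): axioms,
structural rules (weakening, contraction, exchange), two-sided rules for
∧, ∨, →, ¬, and the modal rules □₄R and □_D R. -/
inductive GKD4 : List MF → List MF → Prop
  | ax (A) : GKD4 [A] [A]
  | axBot : GKD4 [.bot] []
  | exL {Γ Γ' Δ : List MF} : GKD4 Γ Δ → Γ.Perm Γ' → GKD4 Γ' Δ
  | exR {Γ Δ Δ' : List MF} : GKD4 Γ Δ → Δ.Perm Δ' → GKD4 Γ Δ'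
  | wL {Γ Δ : List MF} (A : MF) : GKD4 Γ Δ → GKD4 (A :: Γ) Δ
  | wR {Γ Δ : List MF} (A : MF) : GKD4 Γ Δ → GKD4 Γ (A :: Δ)
  | cL {Γ Δ : List MF} {A : MF} : GKD4 (A :: A :: Γ) Δ → GKD4 (A :: Γ) Δ
  | cR {Γ Δ : List MF} {A : MF} : GKD4 Γ (A :: A :: Δ) → GKD4 Γ (A :: Δ)
  | andL1 {Γ Δ : List MF} {A B : MF} : GKD4 (A :: Γ) Δ → GKD4 (A.and B :: Γ) Δ
  | andL2 {Γ Δ : List MF} {A B : MF} : GKD4 (B :: Γ) Δ → GKD4 (A.and B :: Γ) Δ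
  | andR {Γ₀ Δ₀ Γ₁ Δ₁ : List MF} {A B : MF} : GKD4 Γ₀ (A :: Δ₀) → GKD4 Γ₁ (B :: Δ₁) →
      GKD4 (Γ₀ ++ Γ₁) (A.and B :: (Δ₀ ++ Δ₁))
  | orL {Γ₀ Δ₀ Γ₁ Δ₁ : List MF} {A B : MF} : GKD4 (A :: Γ₀) Δ₀ → GKD4 (B :: Γ₁) Δ₁ →
      GKD4 (A.or B :: (Γ₀ ++ Γ₁)) (Δ₀ ++ Δ₁)
  | orR1 {Γ Δ : List MF} {A B : MF} : GKD4 Γ (A :: Δ) → GKD4 Γ (A.or B :: Δ)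
  | orR2 {Γ Δ : List MF} {A B : MF} : GKD4 Γ (B :: Δ) → GKD4 Γ (A.or B :: Δ)
  | impL {Γ₀ Δ₀ Γ₁ Δ₁ : List MF} {A B : MF} : GKD4 Γ₀ (A :: Δ₀) → GKD4 (B :: Γ₁) Δ₁ →
      GKD4 (A.imp B :: (Γ₀ ++ Γ₁)) (Δ₀ ++ Δ₁)
  | impR {Γ Δ : List MF} {A B : MF} : GKD4 (A :: Γ) (B :: Δ) → GKD4 Γ (A.imp B :: Δ)
  | negL {Γ Δ : List MF} {A : MF} : GKD4 Γ (A :: Δ) → GKD4 (A.neg :: Γ) Δ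
  | negR {Γ Δ : List MF} {A : MF} : GKD4 (A :: Γ) Δ → GKD4 Γ (A.neg :: Δ)
  | box4R {Γ : List MF} {A : MF} : GKD4 (Γ ++ Γ.map MF.box) [A] → GKD4 (Γ.map MF.box) [MF.box A]
  | boxDR {Γ : List MF} : GKD4 (Γ ++ Γ.map MF.box) [] → GKD4 (Γ.map MF.box) []

/-- Disjunction of a finite list of propositional formulas (empty: ⊥). -/
def disjL : List PF → PF
  | [] => .bot
  | [A] => A
  | A :: B :: r => A.or (disjL (B :: r))

/-! ### Kripke semantics for MPC -/

/-- Intuitionistic (minimal) forcing, where `⊥` has its own upward-closed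
valuation `Vbot`. -/
def MForces {W : Type} (le : W → W → Prop) (V : ℕ → W → Prop) (Vbot : W → Prop) :
    W → PF → Prop
  | w, .atom n => V n w
  | w, .bot => Vbot w
  | w, .and A B => MForces le V Vbot w A ∧ MForces le V Vbot w B
  | w, .or A B => MForces le V Vbot w A ∨ MForces le V Vbot w B
  | w, .imp A B => ∀ u, le w u → MForces le V Vbot u A → MForces le V Vbot u B

/-- The S4 valuation induced by an MPC valuation: the fresh atom `q` (modal
atom 0) gets `V(⊥)`, and the propositional atom `n` (modal atom `n+1`) gets `V(n)`. -/
def shiftVal {W : Type} (V : ℕ → W → Prop) (Vbot : W → Prop) : ℕ → W → Prop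
  | 0 => Vbot
  | n+1 => V n

/-!
The proof goes through Kripke models. `EBPC` is strongly complete for transitive serial frames with
persistent valuations, by a canonical model of prime theories; an implication missing from a prime
theory `X` is refuted in a prime filter of the Lindenbaum algebra of the entailment `C → D ∈ X`.
Such a model is turned into a `KD4` model by passing from points to pairs of points: a pair carries
the atoms of its first component, while translated formulas are evaluated at its second component.
The pairs starting at `y` are successors of every pair ending at `y`, so `□p` holds at the pair
`(x, y)` exactly when `p` holds at `y` itself, as the translation of atoms demands even though `y`
need not see itself. Soundness of `KD4` in the resulting model finishes the proof.
-/

section PropositionalDerivations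

variable {ef : Prop} {Rule : List PF → PF → Prop} {Γ Δ : Set PF} {A B C : PF}

namespace Deriv

theorem mono (h : Deriv ef Rule Γ A) (hΓ : Γ ⊆ Δ) : Deriv ef Rule Δ A := by
  induction h generalizing Δ with
  | hyp hA => exact .hyp (hΓ hA)
  | andI _ _ ihA ihB => exact .andI (ihA hΓ) (ihB hΓ)
  | andE1 _ ih => exact .andE1 (ih hΓ)
  | andE2 _ ih => exact .andE2 (ih hΓ)
  | orI1 _ ih => exact .orI1 (ih hΓ)
  | orI2 _ ih => exact .orI2 (ih hΓ)
  | orE _ _ _ ih ihA ihB =>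
    exact .orE (ih hΓ) (ihA (Set.insert_subset_insert hΓ)) (ihB (Set.insert_subset_insert hΓ))
  | impI _ ih => exact .impI (ih (Set.insert_subset_insert hΓ))
  | exfalso hef _ ih => exact .exfalso hef (ih hΓ)
  | fAndI _ _ ihB ihC => exact .fAndI (ihB hΓ) (ihC hΓ)
  | fOrE _ _ ihA ihB => exact .fOrE (ihA hΓ) (ihB hΓ)
  | fTr _ _ ihAB ihBC => exact .fTr (ihAB hΓ) (ihBC hΓ)
  | extra hRule _ ih => exact .extra hRule fun p hp => ih p hp hΓ

-- Modus ponens is not available, but eliminating `A ∨ A` has the same effect.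
theorem cut (hA : Deriv ef Rule Γ A) (hB : Deriv ef Rule (insert A Γ) B) : Deriv ef Rule Γ B :=
  .orE (.orI1 hA) hB hB

theorem hyp_insert : Deriv ef Rule (insert A Γ) A :=
  .hyp (Set.mem_insert A Γ)

theorem hyp_singleton : Deriv ef Rule {A} A :=
  .hyp (Set.mem_singleton A)

theorem insert_of_singleton (h : Deriv ef Rule {A} B) : Deriv ef Rule (insert A Γ) B :=
  h.mono (Set.singleton_subset_iff.2 (Set.mem_insert A Γ))

theorem top_intro : Deriv ef Rule Γ PF.top :=
  .impI hyp_insert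

theorem and_or_distrib : Deriv ef Rule {A.and (B.or C)} ((A.and B).or (A.and C)) := by
  have hA (D : PF) : Deriv ef Rule {D, A.and (B.or C)} A :=
    .andE1 (B := B.or C) (.hyp (Set.mem_insert_of_mem _ rfl))
  exact .orE (.andE2 hyp_singleton) (.orI1 (.andI (hA B) hyp_insert))
    (.orI2 (.andI (hA C) hyp_insert))

theorem bot_of_neg (hA : Deriv ef RuleC Γ A) (hnA : Deriv ef RuleC Γ A.neg) :
    Deriv ef RuleC Γ PF.bot :=
  .extra ⟨A, rfl, rfl⟩ (List.forall_mem_cons.2 ⟨hA, List.forall_mem_singleton.2 hnA⟩)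

end Deriv

end PropositionalDerivations

section Entailments

variable {Rule : List PF → PF → Prop} {le : PF → PF → Prop} {A B : PF}

/-- An entailment relation between single formulas that extends derivability and makes `∧` and `∨`
greatest lower and least upper bounds. Both derivability over a fixed set of assumptions and
membership of `C → D` in a fixed prime theory are of this kind. -/
structure IsEntailment (Rule : List PF → PF → Prop) (le : PF → PF → Prop) : Prop where
  of_deriv : ∀ {C D : PF}, Deriv True Rule {C} D → le C D
  trans : ∀ {C D E : PF}, le C D → le D E → le C E
  le_and : ∀ {C D E : PF}, le C D → le C E → le C (D.and E)
  or_le : ∀ {C D E : PF}, le C E → le D E → le (C.or D) E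

namespace IsEntailment

theorem and_le_left (h : IsEntailment Rule le) : le (A.and B) A :=
  h.of_deriv (.andE1 .hyp_singleton)

theorem and_le_right (h : IsEntailment Rule le) : le (A.and B) B :=
  h.of_deriv (.andE2 .hyp_singleton)

theorem le_or_left (h : IsEntailment Rule le) : le A (A.or B) :=
  h.of_deriv (.orI1 .hyp_singleton)

theorem le_or_right (h : IsEntailment Rule le) : le B (A.or B) :=
  h.of_deriv (.orI2 .hyp_singleton)

theorem of_context (Γ : Set PF) :
    IsEntailment Rule fun C D => Deriv True Rule (insert C Γ) D where
  of_deriv h := h.insert_of_singleton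
  trans hCD hDE := hCD.cut (hDE.mono (Set.insert_subset_insert (Set.subset_insert _ Γ)))
  le_and hCD hCE := .andI hCD hCE
  or_le hCE hDE := .orE .hyp_insert
    (hCE.mono (Set.insert_subset_insert (Set.subset_insert _ Γ)))
    (hDE.mono (Set.insert_subset_insert (Set.subset_insert _ Γ)))

/-- Formulas preordered by an entailment relation. -/
abbrev preorder (h : IsEntailment Rule le) : Preorder PF where
  le := le
  le_refl _ := h.of_deriv .hyp_singleton
  le_trans _ _ _ := h.trans

/-- The Lindenbaum algebra of an entailment relation: formulas modulo mutual entailment. -/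
def Lindenbaum (h : IsEntailment Rule le) : Type :=
  letI := h.preorder
  Antisymmetrization PF (· ≤ ·)

/-- The class of a formula in the Lindenbaum algebra. -/
def toLindenbaum (h : IsEntailment Rule le) (A : PF) : h.Lindenbaum :=
  letI := h.preorder
  toAntisymmetrization (· ≤ ·) A

instance (h : IsEntailment Rule le) : DistribLattice h.Lindenbaum :=
  letI := h.preorder
  letI : Lattice h.Lindenbaum :=
    { instPartialOrderAntisymmetrization with
      sup := Quotient.map₂ PF.or fun _ _ hA _ _ hB =>
        ⟨h.or_le (h.trans hA.1 h.le_or_left) (h.trans hB.1 h.le_or_right),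
          h.or_le (h.trans hA.2 h.le_or_left) (h.trans hB.2 h.le_or_right)⟩
      inf := Quotient.map₂ PF.and fun _ _ hA _ _ hB =>
        ⟨h.le_and (h.trans h.and_le_left hA.1) (h.trans h.and_le_right hB.1),
          h.le_and (h.trans h.and_le_left hA.2) (h.trans h.and_le_right hB.2)⟩
      le_sup_left := Quotient.ind₂ fun _ _ => h.le_or_left
      le_sup_right := Quotient.ind₂ fun _ _ => h.le_or_right
      sup_le a b c := Quotient.inductionOn₃ a b c fun _ _ _ => h.or_le
      inf_le_left := Quotient.ind₂ fun _ _ => h.and_le_left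
      inf_le_right := Quotient.ind₂ fun _ _ => h.and_le_right
      le_inf a b c := Quotient.inductionOn₃ a b c fun _ _ _ => h.le_and }
  .ofInfSupLe fun a b c => Quotient.inductionOn₃ a b c fun _ _ _ => h.of_deriv .and_or_distrib

theorem toLindenbaum_le_iff (h : IsEntailment Rule le) :
    h.toLindenbaum A ≤ h.toLindenbaum B ↔ le A B :=
  Iff.rfl

theorem toLindenbaum_and (h : IsEntailment Rule le) :
    h.toLindenbaum (A.and B) = h.toLindenbaum A ⊓ h.toLindenbaum B :=
  rfl

theorem toLindenbaum_or (h : IsEntailment Rule le) :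
    h.toLindenbaum (A.or B) = h.toLindenbaum A ⊔ h.toLindenbaum B :=
  rfl

end IsEntailment

end Entailments

theorem exists_isPrime_notMem_mem_of_not_le {α : Type*} [DistribLattice α] {a b : α}
    (hab : ¬ a ≤ b) : ∃ J : Order.Ideal α, J.IsPrime ∧ a ∉ J ∧ b ∈ J := by
  have hdisj : Disjoint (Order.PFilter.principal a : Set α) (Order.Ideal.principal b : Set α) :=
    Set.disjoint_left.2 fun _ hac hcb => hab (le_trans hac hcb)
  obtain ⟨J, hJ, hbJ, haJ⟩ := DistribLattice.prime_ideal_of_disjoint_filter_ideal hdisj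
  exact ⟨J, hJ, Set.disjoint_left.1 haJ (Order.PFilter.mem_principal.2 le_rfl),
    hbJ (Order.Ideal.mem_principal.2 le_rfl)⟩

section CanonicalModel

/-- A prime theory of `BPC` plus `Rule`, a world of the canonical model. Deductive closure is
required only for derivations from a single assumption, since `and_mem` combines finitely many. -/
structure PrimeTheory (Rule : List PF → PF → Prop) where
  carrier : Set PF
  top_mem : PF.top ∈ carrier
  bot_notMem : PF.bot ∉ carrier
  and_mem : ∀ {C D : PF}, C ∈ carrier → D ∈ carrier → C.and D ∈ carrier
  mem_or_mem : ∀ {C D : PF}, C.or D ∈ carrier → C ∈ carrier ∨ D ∈ carrier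
  mem_of_deriv : ∀ {C D : PF}, C ∈ carrier → Deriv True Rule {C} D → D ∈ carrier

instance {Rule : List PF → PF → Prop} : Membership PF (PrimeTheory Rule) where
  mem X A := A ∈ X.carrier

variable {Rule : List PF → PF → Prop} {le : PF → PF → Prop} {A B : PF}

theorem IsEntailment.exists_primeTheory (h : IsEntailment Rule le) (hAB : ¬ le A B) :
    ∃ X : PrimeTheory Rule, A ∈ X ∧ B ∉ X ∧ ∀ C D, le C D → C ∈ X → D ∈ X := by
  obtain ⟨J, hJ, hA, hB⟩ := exists_isPrime_notMem_mem_of_not_le (mt h.toLindenbaum_le_iff.1 hAB)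
  have upward {C D : PF} (hCD : le C D) (hC : h.toLindenbaum C ∉ J) : h.toLindenbaum D ∉ J :=
    fun hD => hC (J.lower (h.toLindenbaum_le_iff.2 hCD) hD)
  let X : PrimeTheory Rule :=
    { carrier := {C | h.toLindenbaum C ∉ J}
      top_mem := upward (h.of_deriv .top_intro) hA
      bot_notMem := fun hbot => upward (h.of_deriv (.exfalso trivial .hyp_singleton)) hbot hB
      and_mem := fun hC hD hCD => (hJ.mem_or_mem (h.toLindenbaum_and ▸ hCD)).elim hC hD
      mem_or_mem := fun hCD => not_and_or.1 fun ⟨hC, hD⟩ =>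
        hCD (h.toLindenbaum_or ▸ J.sup_mem hC hD)
      mem_of_deriv := fun hC hCD => upward (h.of_deriv hCD) hC }
  exact ⟨X, hA, not_not_intro hB, fun _ _ => upward⟩

theorem exists_primeTheory_of_not_deriv {Γ : Set PF} (hA : ¬ Deriv True Rule Γ A) :
    ∃ X : PrimeTheory Rule, (∀ C ∈ Γ, C ∈ X) ∧ A ∉ X := by
  have hA' : ¬ Deriv True Rule (insert PF.top Γ) A := fun h => hA (.cut .top_intro h)
  obtain ⟨X, htop, hAX, hX⟩ := (IsEntailment.of_context Γ).exists_primeTheory hA'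
  exact ⟨X, fun C hC => hX PF.top C (.hyp (Set.mem_insert_of_mem _ hC)) htop, hAX⟩

namespace PrimeTheory

variable {X Y Z : PrimeTheory Rule}

theorem imp_mem_of_deriv (h : Deriv True Rule {A} B) : A.imp B ∈ X :=
  X.mem_of_deriv X.top_mem (.impI h.insert_of_singleton)

theorem and_mem_iff : A.and B ∈ X ↔ A ∈ X ∧ B ∈ X :=
  ⟨fun h => ⟨X.mem_of_deriv h (.andE1 .hyp_singleton), X.mem_of_deriv h (.andE2 .hyp_singleton)⟩,
    fun h => X.and_mem h.1 h.2⟩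

theorem or_mem_iff : A.or B ∈ X ↔ A ∈ X ∨ B ∈ X :=
  ⟨X.mem_or_mem, fun h => h.elim (X.mem_of_deriv · (.orI1 .hyp_singleton))
    (X.mem_of_deriv · (.orI2 .hyp_singleton))⟩

theorem mem_of_deriv_and {C : PF} (hA : A ∈ X) (hB : B ∈ X)
    (h : ∀ {Γ : Set PF}, Deriv True Rule Γ A → Deriv True Rule Γ B → Deriv True Rule Γ C) :
    C ∈ X :=
  X.mem_of_deriv (X.and_mem hA hB) (h (.andE1 .hyp_singleton) (.andE2 .hyp_singleton))

theorem isEntailment_imp_mem (X : PrimeTheory Rule) :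
    IsEntailment Rule fun C D => C.imp D ∈ X where
  of_deriv := imp_mem_of_deriv
  trans hCD hDE := mem_of_deriv_and hCD hDE .fTr
  le_and hCD hCE := mem_of_deriv_and hCD hCE .fAndI
  or_le hCE hDE := mem_of_deriv_and hCE hDE .fOrE

/-- Accessibility in the canonical model. Modus ponens not being a rule, a theory need not be closed
under its own implications and hence need not be accessible from itself. -/
def Accessible (X Y : PrimeTheory Rule) : Prop :=
  ∀ C D : PF, C.imp D ∈ X → C ∈ Y → D ∈ Y

theorem Accessible.mem (hXY : X.Accessible Y) (hA : A ∈ X) : A ∈ Y :=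
  hXY PF.top A
    (X.mem_of_deriv hA (.impI (.hyp (Set.mem_insert_of_mem _ rfl)))) Y.top_mem

theorem Accessible.trans (hXY : X.Accessible Y) (hYZ : Y.Accessible Z) : X.Accessible Z :=
  fun C D hCD => hYZ C D (hXY.mem hCD)

theorem imp_mem_iff : A.imp B ∈ X ↔ ∀ Y, X.Accessible Y → A ∈ Y → B ∈ Y := by
  refine ⟨fun h Y hXY => hXY A B h, fun h => ?_⟩
  by_contra hAB
  obtain ⟨Y, hA, hB, hXY⟩ := X.isEntailment_imp_mem.exists_primeTheory hAB
  exact hB (h Y hXY hA)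

theorem leftTotal_accessible : Relator.LeftTotal (Accessible (Rule := RuleC)) := by
  intro X
  by_contra! hX
  have hneg : PF.top.neg ∈ X := imp_mem_iff.2 fun Y hXY => absurd hXY (hX Y)
  exact X.bot_notMem (mem_of_deriv_and X.top_mem hneg .bot_of_neg)

end PrimeTheory

end CanonicalModel

section VisserModels

/-- Forcing in Visser's semantics: the clauses are those of intuitionistic forcing, with `⊥` nowhere
forced, but the accessibility relation need not be reflexive. -/
abbrev VisserForces {W : Type} (R : W → W → Prop) (V : ℕ → W → Prop) : W → PF → Prop :=
  MForces R V fun _ => False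

/-- The models of Visser's semantics that validate rule C: transitive ones in which atoms persist
and, in addition, every world has a successor. -/
structure IsSerialVisserModel {W : Type} (R : W → W → Prop) (V : ℕ → W → Prop) : Prop
    extends IsTrans W R where
  leftTotal : Relator.LeftTotal R
  persistent : ∀ {n : ℕ} {w u : W}, R w u → V n w → V n u

theorem PrimeTheory.isSerialVisserModel :
    IsSerialVisserModel (Accessible (Rule := RuleC)) fun n X => PF.atom n ∈ X where
  trans _ _ _ := Accessible.trans
  leftTotal := leftTotal_accessible
  persistent hXY := hXY.mem

theorem PrimeTheory.visserForces_iff_mem {Rule : List PF → PF → Prop} {A : PF}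
    {X : PrimeTheory Rule} : VisserForces Accessible (fun n X => PF.atom n ∈ X) X A ↔ A ∈ X := by
  induction A generalizing X with
  | atom n => exact Iff.rfl
  | bot => exact (iff_false_intro X.bot_notMem).symm
  | and A B ihA ihB => exact (and_congr ihA ihB).trans and_mem_iff.symm
  | or A B ihA ihB => exact (or_congr ihA ihB).trans or_mem_iff.symm
  | imp A B ihA ihB =>
    exact (forall₂_congr fun Y _ => imp_congr ihA ihB).trans imp_mem_iff.symm

theorem ebpc_of_forall_visserForces {Γ : Set PF} {A : PF}
    (h : ∀ (W : Type) (R : W → W → Prop) (V : ℕ → W → Prop), IsSerialVisserModel R V →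
      ∀ w, (∀ C ∈ Γ, VisserForces R V w C) → VisserForces R V w A) : EBPC Γ A := by
  by_contra hA
  obtain ⟨X, hΓ, hAX⟩ := exists_primeTheory_of_not_deriv hA
  have hX := h _ _ _ PrimeTheory.isSerialVisserModel X
    fun C hC => PrimeTheory.visserForces_iff_mem.2 (hΓ C hC)
  exact hAX (PrimeTheory.visserForces_iff_mem.1 hX)

end VisserModels

section ModalSoundness

variable {W : Type} {R : W → W → Prop} {V : ℕ → W → Prop} {w : W}

open Classical in
theorem respects_decide_forces : MF.Respects fun B => decide (Forces R V w B) := by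
  refine ⟨decide_eq_false id, ?_, ?_, ?_, ?_⟩ <;> intros <;> rw [Bool.eq_iff_iff] <;>
    simp only [Bool.and_eq_true, Bool.or_eq_true, Bool.not_eq_true', decide_eq_true_eq,
      decide_eq_false_iff_not]
  all_goals simp only [Forces, imp_iff_not_or]

theorem MF.IsTaut.forces {A : MF} (hA : A.IsTaut) : Forces R V w A := by
  classical
  exact of_decide_eq_true (hA _ respects_decide_forces)

theorem Prv.forces {Ax : MF → Prop} (hAx : ∀ B, Ax B → ∀ w, Forces R V w B) {A : MF}
    (hA : Prv Ax A) (w : W) : Forces R V w A := by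
  induction hA generalizing w with
  | taut hA => exact hA.forces
  | axK => exact fun hAB hA u hwu => hAB u hwu (hA u hwu)
  | extra hA => exact hAx _ hA w
  | mp _ _ ihAB ihA => exact ihAB w (ihA w)
  | nec _ ih => exact fun u _ => ih u

theorem forces_of_ax4 [IsTrans W R] {A : MF} (hA : Ax4 A) :
    Forces R V w A := by
  obtain ⟨B, rfl⟩ := hA
  exact fun hB u hwu v huv => hB v (_root_.trans hwu huv)

theorem forces_of_axD (hserial : Relator.LeftTotal R) {A : MF} (hA : AxD A) : Forces R V w A := by
  subst hA
  intro hbot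
  obtain ⟨u, hwu⟩ := hserial w
  exact hbot u hwu

theorem forces_of_axKD4 [IsTrans W R] (hserial : Relator.LeftTotal R) {A : MF} (hA : AxKD4 A) :
    Forces R V w A :=
  hA.elim forces_of_ax4 (forces_of_axD hserial)

theorem forces_conjL_iff {l : List MF} :
    Forces R V w (conjL l) ↔ ∀ B ∈ l, Forces R V w B := by
  induction l with
  | nil => exact iff_of_true id (List.forall_mem_nil _)
  | cons B l ih => exact (and_congr_right' ih).trans List.forall_mem_cons.symm

theorem ModalConseq.forces {Ax : MF → Prop} {Γ : Set MF} {A : MF} (h : ModalConseq Ax Γ A)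
    (hAx : ∀ B, Ax B → ∀ w, Forces R V w B) (hΓ : ∀ B ∈ Γ, Forces R V w B) : Forces R V w A := by
  obtain ⟨l, hl, hA⟩ := h
  exact hA.forces hAx w (forces_conjL_iff.2 fun B hB => hΓ B (hl B hB))

end ModalSoundness

section EdgeModel

variable {W : Type} {R : W → W → Prop} {V : ℕ → W → Prop} {e f : W × W}

/-- Accessibility in the edge model: from `e` one reaches the `R`-edges that start at the endpoint
of `e` or at one of its successors. Worlds are arbitrary pairs, so that every world of the original
model is the endpoint of one. -/
def EdgeRel (R : W → W → Prop) (e f : W × W) : Prop :=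
  R f.1 f.2 ∧ (e.2 = f.1 ∨ R e.2 f.1)

/-- The valuation of the edge model: a pair carries the atoms of its first component. -/
def edgeVal (V : ℕ → W → Prop) (n : ℕ) (e : W × W) : Prop :=
  V n e.1

theorem edgeRel_of_rel {w : W} (h : R e.2 w) : EdgeRel R e (e.2, w) :=
  ⟨h, .inl rfl⟩

theorem EdgeRel.rel_snd [IsTrans W R] (h : EdgeRel R e f) : R e.2 f.2 :=
  h.2.elim (fun heq => heq ▸ h.1) (fun hR => _root_.trans hR h.1)

instance [IsTrans W R] : IsTrans (W × W) (EdgeRel R) where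
  trans _ _ _ hef hfg :=
    ⟨hfg.1, .inr (hfg.2.elim (fun heq => heq ▸ hef.rel_snd) (_root_.trans hef.rel_snd))⟩

theorem leftTotal_edgeRel (hserial : Relator.LeftTotal R) : Relator.LeftTotal (EdgeRel R) := by
  intro e
  obtain ⟨w, hw⟩ := hserial e.2
  exact ⟨(e.2, w), edgeRel_of_rel hw⟩

namespace IsSerialVisserModel

theorem forces_box_atom_iff (hM : IsSerialVisserModel R V) {n : ℕ} :
    Forces (EdgeRel R) (edgeVal V) e (.box (.atom n)) ↔ V n e.2 := by
  constructor
  · intro h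
    obtain ⟨w, hw⟩ := hM.leftTotal e.2
    exact h (e.2, w) (edgeRel_of_rel hw)
  · rintro h f ⟨-, heq | hR⟩
    · exact heq.subst (motive := V n) h
    · exact hM.persistent hR h

theorem forces_bhk_iff (hM : IsSerialVisserModel R V) {A : PF} :
    Forces (EdgeRel R) (edgeVal V) e (bhk A) ↔ VisserForces R V e.2 A := by
  have := hM.toIsTrans
  induction A generalizing e with
  | atom n => exact hM.forces_box_atom_iff
  | bot => exact iff_false_intro (forces_of_axD (leftTotal_edgeRel hM.leftTotal) rfl)
  | and A B ihA ihB => exact and_congr ihA ihB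
  | or A B ihA ihB => exact or_congr ihA ihB
  | imp A B ihA ihB =>
    exact ⟨fun h w hw hA => ihB.1 (h (e.2, w) (edgeRel_of_rel hw) (ihA.2 hA)),
      fun h f hef hA => ihB.2 (h f.2 hef.rel_snd (ihA.1 hA))⟩

end IsSerialVisserModel

end EdgeModel

theorem stmt8 (Γ : Set PF) (A : PF)
    (h : ModalConseq AxKD4 (bhk '' Γ) (bhk A)) :
    EBPC Γ A := by
  refine ebpc_of_forall_visserForces fun W R V hM w hΓ => ?_
  have := hM.toIsTrans
  have hbhk : ∀ B ∈ bhk '' Γ, Forces (EdgeRel R) (edgeVal V) (w, w) B :=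
    Set.forall_mem_image.2 fun C hC => hM.forces_bhk_iff.2 (hΓ C hC)
  have hA : Forces (EdgeRel R) (edgeVal V) (w, w) (bhk A) :=
    h.forces (fun _ hB _ => forces_of_axKD4 (leftTotal_edgeRel hM.leftTotal) hB) hbhk
  exact hM.forces_bhk_iff.1 hA
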